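/- There is an absolute constant C > 0 with the following property. Let 𝕎 = ⋃_{i=0}^{J−1} 𝕎_i ⊆ [−1/2, 1/2]² be a cubic multiband set consisting of J ≥ 1 pairwise disjoint closed rectangles. Then for all M, N ≥ 2 and every ε ∈ (0, 1/2), the number of indices p ∈ {0, …, MN−1} with ε ≤ λ_{(M,N),𝕎}^{(p)} ≤ 1 − ε is at most C·J·(M·log N + N·log M)/(ε(1−ε)). -/

import Mathlib

open MeasureTheory Matrix Real Set

/-- The 2-D prolate matrix `B_{(M,N),𝕎}`, indexed by pairs, with entries
`∫_𝕎 exp(2πi (f (m−p) + g (n−q))) df dg`. -/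
noncomputable def prolate2D (M N : ℕ) (𝕎 : Set (ℝ × ℝ)) :
    Matrix (Fin M × Fin N) (Fin M × Fin N) ℂ :=
  fun i j => ∫ fg in 𝕎,
    Complex.exp (2 * (Real.pi : ℂ) * Complex.I *
      ((fg.1 : ℂ) * (((i.1 : ℕ) : ℂ) - ((j.1 : ℕ) : ℂ)) +
       (fg.2 : ℂ) * (((i.2 : ℕ) : ℂ) - ((j.2 : ℕ) : ℂ))))

/-- The closed rectangle `[f0 − W0, f0 + W0] × [f1 − W1, f1 + W1] ⊆ ℝ²`. -/
def rect2 (f0 f1 W0 W1 : ℝ) : Set (ℝ × ℝ) :=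
  Set.Icc (f0 - W0) (f0 + W0) ×ˢ Set.Icc (f1 - W1) (f1 + W1)

/-!
Each eigenvalue `λ` of `B` in `[ε, 1 - ε]` contributes at least `ε (1 - ε)` to
`∑ λ (1 - λ) = tr (B - B²)`, so it suffices to bound this trace. It is subadditive over
non-overlapping bands, because the cross terms `tr (Bᵢ Bⱼ)` of positive semidefinite matrices are
nonnegative. For a single rectangle, `B` is a Kronecker product `P ⊗ Q` of one-dimensional prolate
matrices of sizes `M` and `N`, and `tr (P ⊗ Q - (P ⊗ Q)²) ≤ M tr (Q - Q²) + N tr (P - P²)` when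
`0 ≤ P, Q ≤ 1`. In one dimension, Parseval turns `tr (Q - Q²)` into a sum of tails of the squared
Fourier coefficients of an interval; these squares are `O(1 / k²)`, so the `m`-th tail is `O(1 / m)`
and the `N` tails add up to `O(log N)`.
-/

open scoped ComplexOrder ComplexConjugate Kronecker

section IdempotenceDefect

variable {𝕜 m n ι : Type*} [RCLike 𝕜] [Fintype m] [Fintype n]

/-- The trace of `A - A²`. For Hermitian `A` it is `∑ λ (1 - λ)` over the eigenvalues, which for
`0 ≤ A ≤ 1` measures how far `A` is from being an orthogonal projection. -/
noncomputable def idempotenceDefect (A : Matrix n n 𝕜) : ℝ :=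
  RCLike.re (A - A * A).trace

open scoped MatrixOrder Matrix.Norms.L2Operator in
lemma re_trace_mul_nonneg {A B : Matrix n n 𝕜} (hA : A.PosSemidef) (hB : B.PosSemidef) :
    0 ≤ RCLike.re (A * B).trace := by
  classical
  obtain ⟨C, rfl⟩ := CStarAlgebra.nonneg_iff_eq_star_mul_self.mp hB.nonneg
  rw [star_eq_conjTranspose, ← mul_assoc, trace_mul_comm, ← mul_assoc]
  exact (RCLike.nonneg_iff.mp (hA.mul_mul_conjTranspose_same C).trace_nonneg).1

lemma idempotenceDefect_sum_le [Fintype ι] {A : ι → Matrix n n 𝕜} (hA : ∀ i, (A i).PosSemidef) :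
    idempotenceDefect (∑ i, A i) ≤ ∑ i, idempotenceDefect (A i) := by
  simp only [idempotenceDefect, trace_sub, map_sub, Finset.sum_mul_sum, trace_sum, map_sum,
    ← Finset.sum_sub_distrib]
  gcongr with i
  exact Finset.single_le_sum (f := fun j => RCLike.re (A i * A j).trace)
    (fun j _ => re_trace_mul_nonneg (hA i) (hA j)) (Finset.mem_univ i)

lemma coe_re_trace {A : Matrix n n 𝕜} (hA : A.IsHermitian) : (RCLike.re A.trace : 𝕜) = A.trace := by
  classical
  rw [hA.trace_eq_sum_eigenvalues, ← RCLike.ofReal_sum, RCLike.ofReal_re]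

variable [DecidableEq n]

lemma trace_mul_self_eq_sum_sq_eigenvalues {A : Matrix n n 𝕜} (hA : A.IsHermitian) :
    (A * A).trace = ∑ i, (hA.eigenvalues i : 𝕜) ^ 2 := by
  conv_lhs =>
    rw [hA.spectral_theorem, ← map_mul, Unitary.conjStarAlgAut_apply, trace_mul_cycle,
      Unitary.coe_star_mul_self, one_mul, diagonal_mul_diagonal, trace_diagonal]
  simp only [Function.comp_apply, sq]

lemma idempotenceDefect_eq_sum_eigenvalues {A : Matrix n n 𝕜} (hA : A.IsHermitian) :
    idempotenceDefect A = ∑ i, hA.eigenvalues i * (1 - hA.eigenvalues i) := by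
  rw [idempotenceDefect, trace_sub, hA.trace_eq_sum_eigenvalues,
    trace_mul_self_eq_sum_sq_eigenvalues hA, ← Finset.sum_sub_distrib, map_sum]
  refine Finset.sum_congr rfl fun i _ => ?_
  rw [← RCLike.ofReal_pow, ← RCLike.ofReal_sub, RCLike.ofReal_re]
  ring

lemma eigenvalues_le_one {A : Matrix n n 𝕜} (hA : A.IsHermitian) (h : (1 - A).PosSemidef) (i : n) :
    hA.eigenvalues i ≤ 1 := by
  have hnorm : star ⇑(hA.eigenvectorBasis i) ⬝ᵥ ⇑(hA.eigenvectorBasis i) = (1 : 𝕜) := by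
    rw [dotProduct_comm, ← EuclideanSpace.inner_eq_star_dotProduct, inner_self_eq_norm_sq_to_K,
      hA.eigenvectorBasis.orthonormal.1 i, RCLike.ofReal_one, one_pow]
  have hquad := h.dotProduct_mulVec_nonneg ⇑(hA.eigenvectorBasis i)
  rw [sub_mulVec, one_mulVec, dotProduct_sub, hA.mulVec_eigenvectorBasis, dotProduct_smul, hnorm,
    RCLike.real_smul_eq_coe_mul, mul_one, sub_nonneg] at hquad
  exact_mod_cast hquad

lemma eigenvalues_mem_Icc {A : Matrix n n 𝕜} (hA : A.PosSemidef) (h : (1 - A).PosSemidef) (i : n) :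
    hA.1.eigenvalues i ∈ Icc (0 : ℝ) 1 :=
  ⟨hA.eigenvalues_nonneg i, eigenvalues_le_one hA.1 h i⟩

lemma idempotenceDefect_nonneg {A : Matrix n n 𝕜} (hA : A.PosSemidef) (h : (1 - A).PosSemidef) :
    0 ≤ idempotenceDefect A := by
  rw [idempotenceDefect_eq_sum_eigenvalues hA.1]
  exact Finset.sum_nonneg fun i _ =>
    mul_nonneg (eigenvalues_mem_Icc hA h i).1 (sub_nonneg.mpr (eigenvalues_mem_Icc hA h i).2)

lemma re_trace_le_card {A : Matrix n n 𝕜} (hA : (1 - A).PosSemidef) :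
    RCLike.re A.trace ≤ Fintype.card n := by
  have := (RCLike.nonneg_iff.mp hA.trace_nonneg).1
  rwa [trace_sub, trace_one, map_sub, RCLike.natCast_re, sub_nonneg] at this

lemma card_eigenvalues_mul_le_idempotenceDefect {A : Matrix n n 𝕜} (hA : A.PosSemidef)
    (h : (1 - A).PosSemidef) (ε : ℝ) :
    (Nat.card {i // ε ≤ hA.1.eigenvalues i ∧ hA.1.eigenvalues i ≤ 1 - ε} : ℝ) * (ε * (1 - ε)) ≤
      idempotenceDefect A := by
  classical
  rw [Nat.card_eq_fintype_card, Fintype.card_subtype, ← nsmul_eq_mul,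
    idempotenceDefect_eq_sum_eigenvalues hA.1]
  refine (Finset.card_nsmul_le_sum _ _ _ fun i hi => ?_).trans
    (Finset.sum_le_sum_of_subset_of_nonneg (Finset.filter_subset _ _) fun i _ _ => ?_)
  · obtain ⟨hε, hε'⟩ := (Finset.mem_filter.mp hi).2
    nlinarith [mul_nonneg (sub_nonneg.mpr hε) (sub_nonneg.mpr hε')]
  · exact mul_nonneg (eigenvalues_mem_Icc hA h i).1 (sub_nonneg.mpr (eigenvalues_mem_Icc hA h i).2)

lemma idempotenceDefect_kronecker_le [DecidableEq m] {A : Matrix m m 𝕜} {B : Matrix n n 𝕜}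
    (hA : A.PosSemidef) (hA' : (1 - A).PosSemidef) (hB : B.PosSemidef)
    (hB' : (1 - B).PosSemidef) :
    idempotenceDefect (A ⊗ₖ B) ≤
      Fintype.card m * idempotenceDefect B + Fintype.card n * idempotenceDefect A := by
  have hAA : (A * A).IsHermitian := sq A ▸ hA.1.pow 2
  have hBB : (B * B).IsHermitian := sq B ▸ hB.1.pow 2
  have hsplit : idempotenceDefect (A ⊗ₖ B) =
      RCLike.re A.trace * idempotenceDefect B + RCLike.re (B * B).trace * idempotenceDefect A := by
    simp only [idempotenceDefect, ← mul_kronecker_mul, trace_sub, trace_kronecker, map_sub]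
    rw [← coe_re_trace hA.1, ← coe_re_trace hB.1, ← coe_re_trace hAA, ← coe_re_trace hBB]
    simp only [← RCLike.ofReal_mul, RCLike.ofReal_re]
    ring
  have htr : RCLike.re (B * B).trace ≤ Fintype.card n := by
    have := idempotenceDefect_nonneg hB hB'
    rw [idempotenceDefect, trace_sub, map_sub] at this
    linarith [re_trace_le_card hB']
  rw [hsplit]
  gcongr
  exacts [idempotenceDefect_nonneg hB hB', re_trace_le_card hA', idempotenceDefect_nonneg hA hA']

end IdempotenceDefect

section IntegralGram

variable {𝕜 α β ι κ : Type*} [RCLike 𝕜] [MeasurableSpace α] [MeasurableSpace β]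
  {μ : Measure α} {ν : Measure β} {φ : ι → α → 𝕜}

/-- The matrix of `L²(μ)` inner products of a family of functions; it is the transpose of
`Matrix.gram`, since the second factor is the one conjugated, as in `prolate2D`. -/
noncomputable def integralGram (φ : ι → α → 𝕜) (μ : Measure α) : Matrix ι ι 𝕜 :=
  of fun i j => ∫ x, φ i x * conj (φ j x) ∂μ

lemma integralGram_posSemidef [Finite ι] (hφ : ∀ i, MemLp (φ i) 2 μ) :
    (integralGram φ μ).PosSemidef := by
  suffices integralGram φ μ = (gram 𝕜 fun i => (hφ i).toLp)ᵀ from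
    this ▸ (posSemidef_gram 𝕜 _).transpose
  ext i j
  rw [transpose_apply, gram_apply, L2.inner_def]
  refine integral_congr_ae ?_
  filter_upwards [(hφ i).coeFn_toLp, (hφ j).coeFn_toLp] with x hi hj
  rw [hi, hj, RCLike.inner_apply]

lemma integrable_mul_conj (hφ : ∀ i, MemLp (φ i) 2 μ) (i j : ι) :
    Integrable (fun x => φ i x * conj (φ j x)) μ :=
  (hφ i).integrable_mul (hφ j).star

lemma integralGram_restrict_iUnion [Fintype κ] (hφ : ∀ i, MemLp (φ i) 2 μ) {S : κ → Set α}
    (hS : ∀ k, NullMeasurableSet (S k) μ) (hdisj : Pairwise (Function.onFun (AEDisjoint μ) S)) :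
    integralGram φ (μ.restrict (⋃ k, S k)) = ∑ k, integralGram φ (μ.restrict (S k)) := by
  ext i j
  rw [Matrix.sum_apply]
  exact (integral_iUnion_ae hS hdisj (integrable_mul_conj hφ i j).integrableOn).trans
    (tsum_fintype _)

lemma one_sub_integralGram_restrict_posSemidef [Finite ι] [DecidableEq ι]
    (hφ : ∀ i, MemLp (φ i) 2 μ) (horth : integralGram φ μ = 1) {S : Set α} (hS : MeasurableSet S) :
    (1 - integralGram φ (μ.restrict S)).PosSemidef := by
  have hcompl : 1 - integralGram φ (μ.restrict S) = integralGram φ (μ.restrict Sᶜ) := by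
    rw [← horth, sub_eq_iff_eq_add']
    ext i j
    exact (integral_add_compl hS (integrable_mul_conj hφ i j)).symm
  rw [hcompl]
  exact integralGram_posSemidef fun i => (hφ i).restrict _

lemma integralGram_prod [SFinite μ] [SFinite ν] (φ : ι → α → 𝕜) (ψ : κ → β → 𝕜) :
    integralGram (fun (i : ι × κ) (x : α × β) => φ i.1 x.1 * ψ i.2 x.2) (μ.prod ν) =
      integralGram φ μ ⊗ₖ integralGram ψ ν := by
  ext i j
  simp only [integralGram, kroneckerMap_apply, of_apply, map_mul]
  rw [← integral_prod_mul]
  exact integral_congr_ae (.of_forall fun x => mul_mul_mul_comm ..)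

end IntegralGram

section EvenSequences

variable {E : Type*} [NormedAddCommGroup E] [CompleteSpace E] {G : ℤ → E}

lemma tsum_int_sub_sum_range_sub (hG : Summable G) (heven : G.Even) (m r : ℕ) :
    ∑' k, G k - ∑ p ∈ Finset.range (m + 1 + r), G (m - p) =
      ∑' k : ℕ, G ((k + m : ℕ) + 1) + ∑' k : ℕ, G ((k + r : ℕ) + 1) := by
  have hpos : Summable fun k : ℕ => G (k + 1) :=
    hG.comp_injective fun a b hab => by simpa using hab
  have htotal : ∑' k, G k = G 0 + ∑' k : ℕ, G (k + 1) + ∑' k : ℕ, G (k + 1) := by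
    have hneg (k : ℕ) : G (-(k + 1)) = G (k + 1) := heven _
    rw [tsum_of_add_one_of_neg_add_one hpos (by simpa only [hneg] using hpos)]
    simp only [hneg]
    abel
  have hleft : ∑ p ∈ Finset.range (m + 1), G (m - p) = ∑ k ∈ Finset.range m, G (k + 1) + G 0 := by
    rw [← Finset.sum_range_reflect, Finset.sum_range_succ']
    congr 1
    · refine Finset.sum_congr rfl fun k hk => congrArg G ?_
      have := Finset.mem_range.mp hk
      omega
    · exact congrArg G (by omega)
  have hright : ∑ p ∈ Finset.range r, G (m - (m + 1 + p : ℕ)) = ∑ k ∈ Finset.range r, G (k + 1) :=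
    Finset.sum_congr rfl fun k _ => (heven _).symm.trans (congrArg G (by omega))
  have htail (j : ℕ) : ∑' k : ℕ, G ((k + j : ℕ) + 1) =
      ∑' k : ℕ, G (k + 1) - ∑ k ∈ Finset.range j, G (k + 1) :=
    eq_sub_of_add_eq' (hpos.sum_add_tsum_nat_add j)
  rw [htotal, Finset.sum_range_add, hleft, hright, htail, htail]
  abel

lemma nsmul_tsum_int_sub_sum_sum_range_sub (hG : Summable G) (heven : G.Even) (N : ℕ) :
    N • ∑' k, G k - ∑ m ∈ Finset.range N, ∑ p ∈ Finset.range N, G (m - p) =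
      2 • ∑ m ∈ Finset.range N, ∑' k : ℕ, G ((k + m : ℕ) + 1) := by
  have hrow (m : ℕ) (hm : m ∈ Finset.range N) :
      ∑' k, G k - ∑ p ∈ Finset.range N, G (m - p) =
        ∑' k : ℕ, G ((k + m : ℕ) + 1) + ∑' k : ℕ, G ((k + (N - 1 - m) : ℕ) + 1) := by
    obtain ⟨r, rfl⟩ := Nat.exists_eq_add_of_lt (Finset.mem_range.mp hm)
    rw [Nat.add_right_comm m r 1, tsum_int_sub_sum_range_sub hG heven,
      show m + 1 + r - 1 - m = r by omega]
  have hconst : N • ∑' k, G k = ∑ _m ∈ Finset.range N, ∑' k, G k := by simp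
  rw [hconst, ← Finset.sum_sub_distrib, Finset.sum_congr rfl hrow,
    Finset.sum_add_distrib, Finset.sum_range_reflect fun m => ∑' k : ℕ, G ((k + m : ℕ) + 1),
    two_nsmul]

end EvenSequences

section InverseSquareDecay

lemma sum_range_le_of_le_div_sq {g : ℕ → ℝ} {C : ℝ} (hC : 0 ≤ C)
    (hg : ∀ k, k ≠ 0 → g k ≤ C / (k : ℝ) ^ 2) (m n : ℕ) :
    ∑ k ∈ Finset.range n, g (k + m + 1) ≤ 2 * C / (m + 1) := by
  calc ∑ k ∈ Finset.range n, g (k + m + 1)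
      ≤ ∑ k ∈ Finset.range n, C * ((k + (m + 1) : ℕ) ^ 2 : ℝ)⁻¹ := by
        gcongr with k
        exact (hg _ (by lia)).trans_eq (div_eq_mul_inv _ _)
    _ = C * ∑ k ∈ Finset.Ioo m (n + m + 1), ((k : ℝ) ^ 2)⁻¹ := by
        rw [← Finset.mul_sum, Finset.range_eq_Ico,
          Finset.sum_Ico_add' (fun k : ℕ => ((k : ℝ) ^ 2)⁻¹), zero_add]
        rfl
    _ ≤ C * (2 / (m + 1)) := by
        gcongr
        exact sum_Ioo_inv_sq_le m _
    _ = 2 * C / (m + 1) := by ring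

lemma sum_tsum_le_of_le_div_sq {g : ℕ → ℝ} {C : ℝ} (hg₀ : ∀ k, 0 ≤ g k)
    (hg : ∀ k, k ≠ 0 → g k ≤ C / (k : ℝ) ^ 2) (N : ℕ) :
    ∑ m ∈ Finset.range N, ∑' k : ℕ, g (k + m + 1) ≤ 2 * C * (1 + log N) := by
  have hC : 0 ≤ C := by simpa using (hg₀ 1).trans (hg 1 one_ne_zero)
  calc ∑ m ∈ Finset.range N, ∑' k : ℕ, g (k + m + 1)
      ≤ ∑ m ∈ Finset.range N, 2 * C * ((m + 1 : ℕ) : ℝ)⁻¹ := by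
        gcongr with m
        refine Real.tsum_le_of_sum_range_le (fun k => hg₀ _) fun n => ?_
        exact (sum_range_le_of_le_div_sq hC hg m n).trans_eq (by push_cast; ring)
    _ = 2 * C * (harmonic N : ℝ) := by
        rw [← Finset.mul_sum, harmonic]
        push_cast
        rfl
    _ ≤ 2 * C * (1 + log N) := by
        gcongr
        exact harmonic_le_one_add_log N

end InverseSquareDecay

section Fourier

lemma norm_fourier_apply {T : ℝ} (k : ℤ) (x : AddCircle T) : ‖fourier k x‖ = 1 := by
  rw [fourier_apply, Circle.norm_coe]

lemma fourier_mul_conj_fourier {T : ℝ} (m n : ℤ) (x : AddCircle T) :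
    fourier m x * conj (fourier n x) = fourier (m - n) x := by
  rw [← fourier_neg, ← fourier_add, sub_eq_add_neg]

lemma memLp_fourier {T : ℝ} (k : ℤ) {p : ENNReal} {μ : Measure ℝ} [IsFiniteMeasure μ] :
    MemLp (fun x : ℝ => fourier k (x : AddCircle T)) p μ :=
  .of_bound (((fourier k).continuous.comp (AddCircle.continuous_mk' _)).aestronglyMeasurable) 1
    (.of_forall fun _ => (norm_fourier_apply _ _).le)

lemma memLp_fourier_mul_fourier {T : ℝ} (k l : ℤ) {p : ENNReal} {μ : Measure (ℝ × ℝ)}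
    [IsFiniteMeasure μ] :
    MemLp (fun x : ℝ × ℝ => fourier k (x.1 : AddCircle T) * fourier l (x.2 : AddCircle T)) p μ := by
  refine .of_bound (Continuous.aestronglyMeasurable ?_) 1 (.of_forall fun x => ?_)
  · have : Continuous ((↑) : ℝ → AddCircle T) := AddCircle.continuous_mk' _
    fun_prop
  · rw [norm_mul, norm_fourier_apply, norm_fourier_apply, one_mul]

/-- The fundamental domain of the frequency circle `ℝ / ℤ` in which the bands lie. -/
abbrev frequencyPeriod : Set ℝ := Icc (-(1 / 2)) (1 / 2)

/-- The `k`-th Fourier coefficient `∫ x in s, exp (2πi k x)` of the indicator of `s`, with the sign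
convention of `prolate2D`, opposite to that of Mathlib's `fourierCoeff`. -/
noncomputable def indicatorCoeff (s : Set ℝ) (k : ℤ) : ℂ :=
  ∫ x in s, fourier k (x : UnitAddCircle)

lemma indicatorCoeff_zero (s : Set ℝ) : indicatorCoeff s 0 = volume.real s := by
  simp [indicatorCoeff]

lemma indicatorCoeff_neg (s : Set ℝ) (k : ℤ) :
    indicatorCoeff s (-k) = conj (indicatorCoeff s k) := by
  simp only [indicatorCoeff, fourier_neg, integral_conj]

lemma norm_indicatorCoeff_neg (s : Set ℝ) (k : ℤ) :
    ‖indicatorCoeff s (-k)‖ = ‖indicatorCoeff s k‖ := by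
  rw [indicatorCoeff_neg, RCLike.norm_conj]

lemma hasSum_sq_norm_indicatorCoeff {s : Set ℝ} (hs : MeasurableSet s)
    (hsub : s ⊆ frequencyPeriod) :
    HasSum (fun k => ‖indicatorCoeff s k‖ ^ 2) (volume.real s) := by
  have hab : -(1 / 2) < (1 / 2 : ℝ) := by norm_num
  have hL2 : MemLp (s.indicator 1 : ℝ → ℂ) 2 (volume.restrict (Ioc (-(1 / 2)) (1 / 2))) :=
    (memLp_const 1).indicator hs
  have hperiod : s =ᵐ[volume] (Ioc (-(1 / 2)) (1 / 2) ∩ s : Set ℝ) := by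
    have := (Ioc_ae_eq_Icc (μ := volume) (a := -(1 / 2 : ℝ)) (b := 1 / 2)).symm.inter
      (Filter.EventuallyEq.refl (ae volume) s)
    rwa [inter_eq_right.mpr hsub] at this
  have hcoeff (k : ℤ) : fourierCoeffOn hab (s.indicator 1 : ℝ → ℂ) k = indicatorCoeff s (-k) := by
    have hmul (x : ℝ) : fourier (-k) (x : AddCircle (1 / 2 - -(1 / 2) : ℝ)) • s.indicator 1 x
        = s.indicator (fun y : ℝ => fourier (-k) (y : UnitAddCircle)) x := by
      simp only [fourier_coe_apply]
      by_cases hx : x ∈ s <;> norm_num [hx]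
    rw [fourierCoeffOn_eq_integral, intervalIntegral.integral_of_le hab.le]
    simp only [hmul]
    rw [setIntegral_indicator hs, indicatorCoeff, setIntegral_congr_set hperiod]
    norm_num
  have hnorm : ∫ x in (-(1 / 2))..(1 / 2), ‖(s.indicator 1 x : ℂ)‖ ^ 2 = volume.real s := by
    have hsq (x : ℝ) : ‖(s.indicator 1 x : ℂ)‖ ^ 2 = s.indicator 1 x := by
      by_cases hx : x ∈ s <;> simp [hx]
    simp only [hsq]
    rw [intervalIntegral.integral_of_le hab.le, setIntegral_indicator hs,
      ← setIntegral_congr_set hperiod]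
    simp
  have hlength : (1 / 2 - -(1 / 2) : ℝ)⁻¹ = 1 := by norm_num
  simpa only [hcoeff, norm_indicatorCoeff_neg, hnorm, hlength, one_smul] using
    hasSum_sq_fourierCoeffOn hab hL2

lemma indicatorCoeff_frequencyPeriod (k : ℤ) :
    indicatorCoeff frequencyPeriod k = if k = 0 then 1 else 0 := by
  have h := congrFun (fourierCoeff_fourier (T := 1) 0) (-k)
  rw [fourierCoeff_eq_intervalIntegral _ _ (-(1 / 2)),
    intervalIntegral.integral_of_le (by norm_num), ← integral_Icc_eq_integral_Ioc,
    show -(1 / 2) + 1 = (1 / 2 : ℝ) by norm_num] at h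
  simpa [indicatorCoeff, frequencyPeriod, Pi.single_apply] using h

lemma norm_indicatorCoeff_Icc_le (a b : ℝ) {k : ℤ} (hk : k ≠ 0) :
    ‖indicatorCoeff (Icc a b) k‖ ≤ 1 / (π * |(k : ℝ)|) := by
  obtain hab | hab := le_or_gt a b
  swap
  · rw [indicatorCoeff, Icc_eq_empty hab.not_ge, setIntegral_empty, norm_zero]
    positivity
  have hc : (2 * π * Complex.I * k : ℂ) ≠ 0 := by
    simp [hk, pi_ne_zero]
  rw [indicatorCoeff, integral_Icc_eq_integral_Ioc, ← intervalIntegral.integral_of_le hab]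
  have hexp (x : ℝ) :
      fourier k (x : UnitAddCircle) = Complex.exp (2 * π * Complex.I * k * x) := by
    rw [fourier_coe_apply, Complex.ofReal_one, div_one]
  simp only [hexp]
  rw [integral_exp_mul_complex hc, norm_div]
  have hnum (x : ℝ) : ‖Complex.exp (2 * π * Complex.I * k * x)‖ = 1 := by
    rw [← hexp, norm_fourier_apply]
  calc _ ≤ (1 + 1) / ‖(2 * π * Complex.I * k : ℂ)‖ := by
        gcongr
        exact (norm_sub_le _ _).trans_eq (by rw [hnum, hnum])
    _ = 1 / (π * |(k : ℝ)|) := by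
        simp only [norm_mul, RCLike.norm_ofNat, Complex.norm_real, norm_eq_abs, abs_of_pos pi_pos,
          Complex.norm_I, Complex.norm_intCast]
        field_simp
        norm_num

end Fourier

section Prolate

/-- The one-dimensional prolate matrix with entries `∫ x in s, exp (2πi (m - n) x)`. -/
noncomputable def prolate1D (N : ℕ) (s : Set ℝ) : Matrix (Fin N) (Fin N) ℂ :=
  of fun m n => indicatorCoeff s (m - n)

lemma prolate1D_eq_integralGram (N : ℕ) (s : Set ℝ) :
    prolate1D N s = integralGram (fun (m : Fin N) (x : ℝ) => fourier m (x : UnitAddCircle))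
      (volume.restrict s) := by
  ext m n
  simp only [prolate1D, integralGram, of_apply, fourier_mul_conj_fourier, indicatorCoeff]

lemma prolate1D_frequencyPeriod (N : ℕ) : prolate1D N frequencyPeriod = 1 := by
  ext m n
  simp [prolate1D, indicatorCoeff_frequencyPeriod, one_apply, sub_eq_zero, Fin.ext_iff]

lemma prolate1D_posSemidef (N : ℕ) {s : Set ℝ} (hs : volume s ≠ ⊤) :
    (prolate1D N s).PosSemidef := by
  have : IsFiniteMeasure (volume.restrict s) := ⟨by simpa using hs.lt_top⟩
  rw [prolate1D_eq_integralGram]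
  exact integralGram_posSemidef fun _ => memLp_fourier _

lemma one_sub_prolate1D_posSemidef (N : ℕ) {s : Set ℝ} (hs : MeasurableSet s)
    (hsub : s ⊆ frequencyPeriod) : (1 - prolate1D N s).PosSemidef := by
  have hperiod := (prolate1D_eq_integralGram N _).symm.trans (prolate1D_frequencyPeriod N)
  rw [prolate1D_eq_integralGram, ← Measure.restrict_restrict_of_subset hsub]
  exact one_sub_integralGram_restrict_posSemidef (fun _ => memLp_fourier _) hperiod hs

lemma idempotenceDefect_prolate1D (N : ℕ) {s : Set ℝ} (hs : MeasurableSet s)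
    (hsub : s ⊆ frequencyPeriod) :
    idempotenceDefect (prolate1D N s) =
      2 * ∑ m ∈ Finset.range N, ∑' k : ℕ, ‖indicatorCoeff s ((k + m : ℕ) + 1)‖ ^ 2 := by
  have hparseval := hasSum_sq_norm_indicatorCoeff hs hsub
  have hentry (m n : Fin N) :
      prolate1D N s m n * prolate1D N s n m = (‖indicatorCoeff s (m - n)‖ ^ 2 : ℝ) := by
    rw [prolate1D, of_apply, of_apply, ← neg_sub (m : ℤ), indicatorCoeff_neg, RCLike.mul_conj]
    norm_cast
  have htrace : (prolate1D N s).trace = (N * volume.real s : ℝ) := by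
    simp [trace, prolate1D, indicatorCoeff_zero]
  have htraceSq : (prolate1D N s * prolate1D N s).trace =
      (∑ m ∈ Finset.range N, ∑ n ∈ Finset.range N, ‖indicatorCoeff s (m - n)‖ ^ 2 : ℝ) := by
    simp only [trace, diag_apply, mul_apply, hentry, Finset.sum_range, Complex.ofReal_sum]
  have heven : (fun k => ‖indicatorCoeff s k‖ ^ 2).Even := fun k => by
    simp only [norm_indicatorCoeff_neg]
  rw [idempotenceDefect, trace_sub, htrace, htraceSq, ← Complex.ofReal_sub, RCLike.re_eq_complex_re,
    Complex.ofReal_re, ← hparseval.tsum_eq, ← nsmul_eq_mul,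
    nsmul_tsum_int_sub_sum_sum_range_sub hparseval.summable heven, two_nsmul, two_mul]

lemma idempotenceDefect_prolate1D_Icc_le {N : ℕ} (hN : 2 ≤ N) {a b : ℝ}
    (hsub : Icc a b ⊆ frequencyPeriod) :
    idempotenceDefect (prolate1D N (Icc a b)) ≤ 2 * log N := by
  have hcoeff (k : ℕ) (hk : k ≠ 0) :
      ‖indicatorCoeff (Icc a b) (k : ℤ)‖ ^ 2 ≤ (1 / π ^ 2) / (k : ℝ) ^ 2 := by
    have := norm_indicatorCoeff_Icc_le a b (Int.natCast_ne_zero.mpr hk)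
    calc _ ≤ (1 / (π * |((k : ℤ) : ℝ)|)) ^ 2 := by gcongr
      _ = _ := by simp [field]
  have hlog : log 2 ≤ log N := log_le_log (by norm_num) (by exact_mod_cast hN)
  calc idempotenceDefect (prolate1D N (Icc a b))
      ≤ 2 * (2 * (1 / π ^ 2) * (1 + log N)) := by
        rw [idempotenceDefect_prolate1D N measurableSet_Icc hsub]
        gcongr
        exact sum_tsum_le_of_le_div_sq (g := fun k : ℕ => ‖indicatorCoeff (Icc a b) k‖ ^ 2)
          (fun _ => sq_nonneg _) hcoeff N
    _ ≤ 2 * (2 * (1 / 3 ^ 2) * (1 + log N)) := by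
        have := pi_gt_three.le
        have := log_natCast_nonneg N
        gcongr
    _ ≤ 2 * log N := by linarith [log_two_gt_d9]

lemma prolate2D_eq_integralGram (M N : ℕ) (S : Set (ℝ × ℝ)) :
    prolate2D M N S = integralGram
      (fun (i : Fin M × Fin N) (x : ℝ × ℝ) =>
        fourier i.1 (x.1 : UnitAddCircle) * fourier i.2 (x.2 : UnitAddCircle))
      (volume.restrict S) := by
  ext i j
  refine integral_congr_ae (.of_forall fun x => ?_)
  dsimp only
  rw [map_mul, mul_mul_mul_comm, fourier_mul_conj_fourier, fourier_mul_conj_fourier,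
    fourier_coe_apply, fourier_coe_apply, ← Complex.exp_add]
  congr 1
  push_cast
  ring

lemma prolate2D_prod (M N : ℕ) (s t : Set ℝ) :
    prolate2D M N (s ×ˢ t) = prolate1D M s ⊗ₖ prolate1D N t := by
  rw [prolate2D_eq_integralGram, prolate1D_eq_integralGram, prolate1D_eq_integralGram,
    ← integralGram_prod, Measure.prod_restrict, Measure.volume_eq_prod]

lemma prolate2D_posSemidef (M N : ℕ) {S : Set (ℝ × ℝ)} (hS : volume S ≠ ⊤) :
    (prolate2D M N S).PosSemidef := by
  have : IsFiniteMeasure (volume.restrict S) := ⟨by simpa using hS.lt_top⟩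
  rw [prolate2D_eq_integralGram]
  exact integralGram_posSemidef fun _ => memLp_fourier_mul_fourier _ _

lemma one_sub_prolate2D_posSemidef (M N : ℕ) {S : Set (ℝ × ℝ)} (hS : MeasurableSet S)
    (hsub : S ⊆ frequencyPeriod ×ˢ frequencyPeriod) : (1 - prolate2D M N S).PosSemidef := by
  have hsquare : prolate2D M N (frequencyPeriod ×ˢ frequencyPeriod) = 1 := by
    rw [prolate2D_prod, prolate1D_frequencyPeriod, prolate1D_frequencyPeriod, one_kronecker_one]
  have : IsFiniteMeasure (volume.restrict (frequencyPeriod ×ˢ frequencyPeriod)) :=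
    ⟨by simpa using (isCompact_Icc.prod isCompact_Icc).measure_lt_top⟩
  rw [prolate2D_eq_integralGram] at hsquare ⊢
  rw [← Measure.restrict_restrict_of_subset hsub]
  exact one_sub_integralGram_restrict_posSemidef (fun _ => memLp_fourier_mul_fourier _ _) hsquare hS

lemma prolate2D_iUnion {ι : Type*} [Fintype ι] (M N : ℕ) {S : ι → Set (ℝ × ℝ)}
    (hS : ∀ i, NullMeasurableSet (S i)) (hfin : volume (⋃ i, S i) ≠ ⊤)
    (hdisj : Pairwise (Function.onFun (AEDisjoint volume) S)) :
    prolate2D M N (⋃ i, S i) = ∑ i, prolate2D M N (S i) := by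
  have : IsFiniteMeasure (volume.restrict (⋃ i, S i)) := ⟨by simpa using hfin.lt_top⟩
  have hunion := integralGram_restrict_iUnion (μ := volume.restrict (⋃ i, S i))
    (fun i : Fin M × Fin N => memLp_fourier_mul_fourier (T := 1) i.1 i.2)
    (fun i => (hS i).mono Measure.restrict_le_self)
    (fun i j hij => Measure.restrict_le_self.absolutelyContinuous (hdisj hij))
  simpa only [Measure.restrict_restrict_of_subset (subset_iUnion S _),
    Measure.restrict_restrict_of_subset Subset.rfl, ← prolate2D_eq_integralGram] using hunion

lemma idempotenceDefect_prolate2D_Icc_prod_Icc_le {M N : ℕ} (hM : 2 ≤ M) (hN : 2 ≤ N)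
    {a b c d : ℝ} (hsub : Icc a b ×ˢ Icc c d ⊆ frequencyPeriod ×ˢ frequencyPeriod) :
    idempotenceDefect (prolate2D M N (Icc a b ×ˢ Icc c d)) ≤ 2 * (M * log N + N * log M) := by
  obtain hempty | hne := (Icc a b ×ˢ Icc c d).eq_empty_or_nonempty
  · have hzero : prolate2D M N ∅ = 0 := by
      ext i j
      simp [prolate2D]
    rw [hempty, hzero, idempotenceDefect, mul_zero, sub_zero, trace_zero, map_zero]
    positivity
  obtain ⟨hab, hcd⟩ := (prod_subset_prod_iff' hne).mp hsub
  rw [prolate2D_prod]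
  calc _ ≤ Fintype.card (Fin M) * idempotenceDefect (prolate1D N (Icc c d)) +
        Fintype.card (Fin N) * idempotenceDefect (prolate1D M (Icc a b)) :=
        idempotenceDefect_kronecker_le
          (prolate1D_posSemidef M measure_Icc_lt_top.ne)
          (one_sub_prolate1D_posSemidef M measurableSet_Icc hab)
          (prolate1D_posSemidef N measure_Icc_lt_top.ne)
          (one_sub_prolate1D_posSemidef N measurableSet_Icc hcd)
    _ ≤ M * (2 * log N) + N * (2 * log M) := by
        rw [Fintype.card_fin, Fintype.card_fin]
        gcongr
        · exact idempotenceDefect_prolate1D_Icc_le hN hcd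
        · exact idempotenceDefect_prolate1D_Icc_le hM hab
    _ = 2 * (M * log N + N * log M) := by ring

lemma isCompact_rect2 (f₀ f₁ W₀ W₁ : ℝ) : IsCompact (rect2 f₀ f₁ W₀ W₁) :=
  isCompact_Icc.prod isCompact_Icc

lemma idempotenceDefect_prolate2D_iUnion_rect2_le {ι : Type*} [Fintype ι] {M N : ℕ} (hM : 2 ≤ M)
    (hN : 2 ≤ N) {f₀ f₁ W₀ W₁ : ι → ℝ}
    (hsub : ∀ i, rect2 (f₀ i) (f₁ i) (W₀ i) (W₁ i) ⊆ frequencyPeriod ×ˢ frequencyPeriod)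
    (hdisj : Pairwise fun i j => AEDisjoint volume
      (rect2 (f₀ i) (f₁ i) (W₀ i) (W₁ i)) (rect2 (f₀ j) (f₁ j) (W₀ j) (W₁ j))) :
    idempotenceDefect (prolate2D M N (⋃ i, rect2 (f₀ i) (f₁ i) (W₀ i) (W₁ i))) ≤
      2 * Fintype.card ι * (M * log N + N * log M) := by
  have hcompact (i : ι) := isCompact_rect2 (f₀ i) (f₁ i) (W₀ i) (W₁ i)
  rw [prolate2D_iUnion M N (fun i => (hcompact i).measurableSet.nullMeasurableSet)
    (isCompact_iUnion hcompact).measure_ne_top hdisj]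
  calc _ ≤ ∑ i, idempotenceDefect (prolate2D M N (rect2 (f₀ i) (f₁ i) (W₀ i) (W₁ i))) :=
        idempotenceDefect_sum_le fun i => prolate2D_posSemidef M N (hcompact i).measure_ne_top
    _ ≤ ∑ _i : ι, 2 * (M * log N + N * log M) :=
        Finset.sum_le_sum fun i _ => idempotenceDefect_prolate2D_Icc_prod_Icc_le hM hN (hsub i)
    _ = 2 * Fintype.card ι * (M * log N + N * log M) := by
        rw [Finset.sum_const, Finset.card_univ, nsmul_eq_mul]
        ring

end Prolate

theorem cubic_multiband_sharp_transition_general {ι : Type*} [Fintype ι] {M N : ℕ} (hM : 2 ≤ M)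
    (hN : 2 ≤ N) {f₀ f₁ W₀ W₁ : ι → ℝ}
    (hsub : ∀ i, rect2 (f₀ i) (f₁ i) (W₀ i) (W₁ i) ⊆ frequencyPeriod ×ˢ frequencyPeriod)
    (hdisj : Pairwise fun i j => AEDisjoint volume
      (rect2 (f₀ i) (f₁ i) (W₀ i) (W₁ i)) (rect2 (f₀ j) (f₁ j) (W₀ j) (W₁ j)))
    (hA : (prolate2D M N (⋃ i, rect2 (f₀ i) (f₁ i) (W₀ i) (W₁ i))).IsHermitian)
    {ε : ℝ} (hε : ε ∈ Ioo 0 1) :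
    (Nat.card {i // ε ≤ hA.eigenvalues i ∧ hA.eigenvalues i ≤ 1 - ε} : ℝ) ≤
      2 * Fintype.card ι * (M * log N + N * log M) / (ε * (1 - ε)) := by
  have hcompact : IsCompact (⋃ i, rect2 (f₀ i) (f₁ i) (W₀ i) (W₁ i)) :=
    isCompact_iUnion fun i => isCompact_rect2 (f₀ i) (f₁ i) (W₀ i) (W₁ i)
  have hpos := prolate2D_posSemidef M N hcompact.measure_ne_top
  have hle := one_sub_prolate2D_posSemidef M N hcompact.measurableSet (iUnion_subset hsub)
  rw [le_div_iff₀ (mul_pos hε.1 (sub_pos.mpr hε.2))]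
  calc _ ≤ idempotenceDefect (prolate2D M N (⋃ i, rect2 (f₀ i) (f₁ i) (W₀ i) (W₁ i))) :=
        card_eigenvalues_mul_le_idempotenceDefect hpos hle ε
    _ ≤ _ := idempotenceDefect_prolate2D_iUnion_rect2_le hM hN hsub hdisj

theorem cubic_multiband_sharp_transition :
    ∃ C : ℝ, 0 < C ∧
      ∀ (J : ℕ), 1 ≤ J → ∀ (f0 f1 W0 W1 : Fin J → ℝ),
        (∀ i, W0 i ∈ Set.Ioo (0 : ℝ) (1 / 2)) → (∀ i, W1 i ∈ Set.Ioo (0 : ℝ) (1 / 2)) →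
        (∀ i, rect2 (f0 i) (f1 i) (W0 i) (W1 i) ⊆
          Set.Icc (-(1 / 2) : ℝ) (1 / 2) ×ˢ Set.Icc (-(1 / 2) : ℝ) (1 / 2)) →
        (∀ i j, i ≠ j →
          Disjoint (rect2 (f0 i) (f1 i) (W0 i) (W1 i)) (rect2 (f0 j) (f1 j) (W0 j) (W1 j))) →
        ∀ (M N : ℕ), 2 ≤ M → 2 ≤ N →
          ∀ (hA : (prolate2D M N (⋃ i, rect2 (f0 i) (f1 i) (W0 i) (W1 i))).IsHermitian)
            (μ : Fin (M * N) → ℝ), Antitone μ →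
            (∃ e : (Fin M × Fin N) ≃ Fin (M * N), hA.eigenvalues = μ ∘ e) →
            ∀ ε : ℝ, ε ∈ Set.Ioo (0 : ℝ) (1 / 2) →
              (Nat.card {p : Fin (M * N) // ε ≤ μ p ∧ μ p ≤ 1 - ε} : ℝ) ≤
                C * (J : ℝ) * ((M : ℝ) * Real.log (N : ℝ) + (N : ℝ) * Real.log (M : ℝ)) /
                  (ε * (1 - ε)) := by
  refine ⟨2, two_pos, ?_⟩
  intro J _ f0 f1 W0 W1 _ _ hsub hdisj M N hM hN hA μ _ ⟨e, he⟩ ε hε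
  have hcard : Nat.card {p // ε ≤ μ p ∧ μ p ≤ 1 - ε} =
      Nat.card {i // ε ≤ hA.eigenvalues i ∧ hA.eigenvalues i ≤ 1 - ε} :=
    Nat.card_congr (e.subtypeEquiv fun i => by rw [he, Function.comp_apply]).symm
  have hbound := cubic_multiband_sharp_transition_general hM hN hsub
    (fun i j hij => (hdisj i j hij).aedisjoint) hA ⟨hε.1, hε.2.trans one_half_lt_one⟩
  rwa [Fintype.card_fin, ← hcard] at hbound
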